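/- The algebra of Sp(2n,ℂ)-invariant polynomial functions on 𝔰𝔭(2n) ⊕ ℂ^{2n} is a polynomial algebra freely generated by the 2n functions Tr(x²), Tr(x⁴), …, Tr(x^{2n}), ⟨v, x v⟩, ⟨v, x³ v⟩, …, ⟨v, x^{2n−1} v⟩. -/

import Mathlib

open Matrix

/-- The standard symplectic matrix `J` on `ℂ^{2n}`, with blocks `[[0, 1], [-1, 0]]`. -/
noncomputable def symplJ (n : ℕ) : Matrix (Fin n ⊕ Fin n) (Fin n ⊕ Fin n) ℂ :=
  Matrix.fromBlocks 0 1 (-1) 0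

/-- The symplectic form `⟨u, w⟩ = uᵀ J w`. -/
noncomputable def symplForm (n : ℕ) (u w : Fin n ⊕ Fin n → ℂ) : ℂ :=
  u ⬝ᵥ ((symplJ n) *ᵥ w)

/-- `x ∈ 𝔰𝔭(2n)`. -/
def inSp (n : ℕ) (x : Matrix (Fin n ⊕ Fin n) (Fin n ⊕ Fin n) ℂ) : Prop :=
  xᵀ * symplJ n + symplJ n * x = 0

/-- `g ∈ Sp(2n)`. -/
def inSpGroup (n : ℕ) (g : Matrix (Fin n ⊕ Fin n) (Fin n ⊕ Fin n) ℂ) : Prop :=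
  gᵀ * symplJ n * g = symplJ n

/-- A function on `𝔰𝔭(2n) ⊕ ℂ^{2n}` is polynomial if it is given by a polynomial
in the matrix entries and vector coordinates. -/
def IsPolyFn (n : ℕ)
    (F : Matrix (Fin n ⊕ Fin n) (Fin n ⊕ Fin n) ℂ × (Fin n ⊕ Fin n → ℂ) → ℂ) : Prop :=
  ∃ q : MvPolynomial (((Fin n ⊕ Fin n) × (Fin n ⊕ Fin n)) ⊕ (Fin n ⊕ Fin n)) ℂ,
    ∀ x v, F (x, v) = MvPolynomial.eval (Sum.elim (fun ij => x ij.1 ij.2) v) q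

/-- The proposed generators: `Tr(x²), …, Tr(x^{2n})` and `⟨v,xv⟩, ⟨v,x³v⟩, …, ⟨v,x^{2n−1}v⟩`. -/
noncomputable def spGen (n : ℕ) (i : Fin n ⊕ Fin n)
    (p : Matrix (Fin n ⊕ Fin n) (Fin n ⊕ Fin n) ℂ × (Fin n ⊕ Fin n → ℂ)) : ℂ :=
  Sum.elim (fun k : Fin n => (p.1 ^ (2 * ((k : ℕ) + 1))).trace)
    (fun k : Fin n => symplForm n p.2 ((p.1 ^ (2 * (k : ℕ) + 1)) *ᵥ p.2)) i

/-!
Let `D` be the determinant of the `n × n` Hankel matrix of the moments `⟨v, x^(2m+1) v⟩`. Where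
`D ≠ 0`, the vectors `xᵏ v` with `k < 2n` form, after rescaling the odd ones by the inverse Hankel
matrix, a symplectic basis. In this basis `(x, v)` becomes a normal form whose entries are
polynomials in the moments and `1 / D`. By Cayley–Hamilton and Newton's identities all moments are
polynomials in the generators, so `Dᵏ F` is one for every invariant `F` and some `k`.

To remove the denominator, observe that the generators map `𝔰𝔭 ⊕ V` onto affine space. Companion
matrices yield an `x` with prescribed traces and a cyclic `v`; replacing `v` by `p(x) v`
multiplies the moment sequence by `p(X) p(-X) = H(X²)`, and over an algebraically closed field
every `H` arises this way. Surjectivity makes the generators algebraically independent. It also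
shows, by the Nullstellensatz, that a prime factor of `D` which divides `Dᵏ F` as a function divides
it as a polynomial in the generators, so the factors of `Dᵏ` can be cancelled one at a time.
-/

section Newton

open Polynomial

variable {R ι : Type*} [CommRing R] [Fintype ι] [DecidableEq ι]

theorem derivative_det (A : Matrix ι ι R[X]) :
    derivative A.det = (A.adjugate * A.map derivative).trace := by
  have key (i : ι) : (A.adjugate * A.map derivative) i i =
      ∑ σ : Equiv.Perm ι, Equiv.Perm.sign σ •
        ((∏ j ∈ Finset.univ.erase i, A (σ j) j) * derivative (A (σ i) i)) := by
    calc (A.adjugate * A.map derivative) i i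
        = (A.adjugate *ᵥ fun k ↦ derivative (A k i)) i := rfl
      _ = (A.updateCol i fun k ↦ derivative (A k i)).det := by
        rw [← cramer_eq_adjugate_mulVec, cramer_apply]
      _ = _ := by
        rw [det_apply]
        refine Finset.sum_congr rfl fun σ _ ↦ ?_
        rw [← Finset.prod_erase_mul _ _ (Finset.mem_univ i), updateCol_self]
        congr 2
        exact Finset.prod_congr rfl fun j hj ↦ updateCol_ne (Finset.ne_of_mem_erase hj)
  simp only [det_apply, Units.smul_def, derivative_sum, derivative_smul, derivative_prod_finset,
    Matrix.trace, diag_apply, key, Finset.smul_sum]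
  exact Finset.sum_comm

theorem derivative_charpoly (M : Matrix ι ι R) :
    derivative M.charpoly = M.charmatrix.adjugate.trace := by
  have h : M.charmatrix.map derivative = 1 := by
    ext1 i j
    rcases eq_or_ne i j with rfl | hij
    · simp
    · simp [hij]
  rw [charpoly, derivative_det, h, mul_one]

/-- The polynomial with matrix coefficients `adj (X - M)`. -/
noncomputable def charAdjugate (M : Matrix ι ι R) : (Matrix ι ι R)[X] :=
  matPolyEquiv M.charmatrix.adjugate

theorem charAdjugate_mul_X_sub_C (M : Matrix ι ι R) :
    charAdjugate M * (X - C M) = M.charpoly.map (algebraMap R (Matrix ι ι R)) := by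
  rw [← matPolyEquiv_charmatrix, charAdjugate, ← map_mul, adjugate_mul, ← charpoly,
    matPolyEquiv_smul_one]

theorem charAdjugate_coeff_card (M : Matrix ι ι R) :
    (charAdjugate M).coeff (Fintype.card ι) = 0 := by
  nontriviality R
  nontriviality Matrix ι ι R
  by_cases h : charAdjugate M = 0
  · simp [h]
  have : (charAdjugate M * (X - C M)).natDegree = (charAdjugate M).natDegree + 1 := by
    rw [natDegree_mul' (by simpa using h), natDegree_X_sub_C]
  rw [charAdjugate_mul_X_sub_C] at this
  apply coeff_eq_zero_of_natDegree_lt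
  have := natDegree_map_le (f := algebraMap R (Matrix ι ι R)) (p := M.charpoly)
  rw [M.charpoly_natDegree_eq_dim] at this
  omega

theorem charAdjugate_coeff_sub (M : Matrix ι ι R) (j : ℕ) :
    (charAdjugate M).coeff j - (charAdjugate M).coeff (j + 1) * M =
      algebraMap R _ (M.charpoly.coeff (j + 1)) := by
  rw [← coeff_mul_X_sub_C, charAdjugate_mul_X_sub_C, coeff_map]

theorem trace_charAdjugate_coeff (M : Matrix ι ι R) (j : ℕ) :
    ((charAdjugate M).coeff j).trace = (j + 1) * M.charpoly.coeff (j + 1) := by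
  have := congrArg (coeff · j) (derivative_charpoly M)
  simp only [coeff_derivative, Matrix.trace, finsetSum_coeff, diag_apply] at this
  simp only [charAdjugate, Matrix.trace, diag_apply, matPolyEquiv_coeff_apply, ← this]
  exact mul_comm _ _

theorem mul_charpoly_coeff_eq_sum (M : Matrix ι ι R) {j : ℕ} (hj : j ≤ Fintype.card ι) :
    (j : R) * M.charpoly.coeff j =
      ∑ i ∈ Finset.range (Fintype.card ι + 1 - j), M.charpoly.coeff (j + i) * (M ^ i).trace := by
  nontriviality R
  cases j with
  | zero =>
    have h := congrArg Matrix.trace (aeval_self_charpoly M)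
    rw [aeval_eq_sum_range, charpoly_natDegree_eq_dim, trace_sum] at h
    simpa using h.symm
  | succ j =>
    have telescope (i : ℕ) : M.charpoly.coeff (j + 1 + i) * (M ^ i).trace =
        ((charAdjugate M).coeff (j + i) * M ^ i).trace -
          ((charAdjugate M).coeff (j + (i + 1)) * M ^ (i + 1)).trace := by
      rw [pow_succ', ← mul_assoc, ← trace_sub, ← sub_mul, ← add_assoc, charAdjugate_coeff_sub,
        ← Algebra.smul_def, trace_smul, smul_eq_mul, add_right_comm]
    rw [Finset.sum_congr rfl fun i _ ↦ telescope i, Finset.sum_range_sub',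
      show j + (Fintype.card ι + 1 - (j + 1)) = Fintype.card ι by omega,
      charAdjugate_coeff_card]
    simp [trace_charAdjugate_coeff]

theorem newton_charpoly (M : Matrix ι ι R) {k : ℕ} (hk : k ≤ Fintype.card ι) :
    (k : R) * M.charpoly.coeff (Fintype.card ι - k) = -∑ i ∈ Finset.range k,
      M.charpoly.coeff (Fintype.card ι - i) * (M ^ (k - i)).trace := by
  have h := mul_charpoly_coeff_eq_sum M (Nat.sub_le (Fintype.card ι) k)
  rw [show Fintype.card ι + 1 - (Fintype.card ι - k) = k + 1 by omega,
    ← Finset.sum_range_reflect, Finset.sum_range_succ, Nat.cast_sub hk] at h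
  have reindex : ∀ i ∈ Finset.range k,
      M.charpoly.coeff (Fintype.card ι - k + (k + 1 - 1 - i)) * (M ^ (k + 1 - 1 - i)).trace =
        M.charpoly.coeff (Fintype.card ι - i) * (M ^ (k - i)).trace := by
    intro i hi
    rw [Finset.mem_range] at hi
    congr 3
    omega
  rw [Finset.sum_congr rfl reindex] at h
  simp only [add_tsub_cancel_right, tsub_self, add_zero, pow_zero, trace_one] at h
  linear_combination -h

theorem charpoly_coeff_mem {K A : Type*} [Field K] [CharZero K] [CommRing A] [Algebra K A]
    (S : Subalgebra K A) {M : Matrix ι ι A}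
    (hM : ∀ k ∈ Set.Icc 1 (Fintype.card ι), (M ^ k).trace ∈ S) (j : ℕ) :
    M.charpoly.coeff j ∈ S := by
  nontriviality A
  have top (k : ℕ) (hk : k ≤ Fintype.card ι) :
      M.charpoly.coeff (Fintype.card ι - k) ∈ S := by
    induction k using Nat.strong_induction_on with
    | _ k ih =>
      rcases Nat.eq_zero_or_pos k with rfl | hpos
      · rw [Nat.sub_zero, ← charpoly_natDegree_eq_dim M, M.charpoly_monic.coeff_natDegree]
        exact one_mem S
      · have hsum : (k : K) • M.charpoly.coeff (Fintype.card ι - k) ∈ S := by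
          rw [Nat.cast_smul_eq_nsmul, nsmul_eq_mul, newton_charpoly M hk]
          refine neg_mem (sum_mem fun i hi ↦ ?_)
          rw [Finset.mem_range] at hi
          exact mul_mem (ih i hi (by omega)) (hM _ ⟨by omega, by omega⟩)
        have hk0 : (k : K) ≠ 0 := Nat.cast_ne_zero.2 hpos.ne'
        simpa [smul_smul, hk0] using S.smul_mem hsum (k : K)⁻¹
  rcases le_or_gt j (Fintype.card ι) with hj | hj
  · simpa [Nat.sub_sub_self hj] using top (Fintype.card ι - j) (Nat.sub_le _ _)
  · rw [coeff_eq_zero_of_natDegree_lt (by simpa using hj)]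
    exact zero_mem S

/-- The sequence `e` with `e 0 = 1` obtained from power sums `t` by Newton's recursion
`k * e k = -∑ i < k, e i * t (k - i)`: these are the coefficients, from the top, of the monic
polynomial with power sums `t`. -/
noncomputable def newtonCoeff {K : Type*} [Field K] (t : ℕ → K) : ℕ → K
  | 0 => 1
  | k + 1 => -(k + 1 : K)⁻¹ * ∑ i : Fin (k + 1), newtonCoeff t i * t (k + 1 - i)

theorem newtonCoeff_rec {K : Type*} [Field K] [CharZero K] (t : ℕ → K) (k : ℕ) :
    (k : K) * newtonCoeff t k = -∑ i ∈ Finset.range k, newtonCoeff t i * t (k - i) := by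
  cases k with
  | zero => simp
  | succ k =>
    have : (k + 1 : K) ≠ 0 := Nat.cast_add_one_ne_zero k
    rw [newtonCoeff, ← Fin.sum_univ_eq_sum_range fun i ↦ newtonCoeff t i * t (k + 1 - i)]
    push_cast
    field_simp

theorem eq_of_newton_rec {e s t : ℕ → R} {n : ℕ} (he : e 0 = 1)
    (h : ∀ k ≤ n, ∑ i ∈ Finset.range k, e i * s (k - i) = ∑ i ∈ Finset.range k, e i * t (k - i))
    {k : ℕ} (hk : k ∈ Set.Icc 1 n) : s k = t k := by
  induction k using Nat.strong_induction_on with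
  | _ k ih =>
    obtain ⟨m, rfl⟩ := Nat.exists_eq_add_of_le' hk.1
    have hm := h _ hk.2
    have lower : ∀ i ∈ Finset.range m,
        e (i + 1) * s (m + 1 - (i + 1)) = e (i + 1) * t (m + 1 - (i + 1)) := by
      intro i hi
      rw [Finset.mem_range] at hi
      rw [ih _ (by omega) ⟨by omega, by have := hk.2; omega⟩]
    rw [Finset.sum_range_succ', Finset.sum_range_succ', Finset.sum_congr rfl lower] at hm
    simpa [he] using hm

theorem exists_monic_forall_trace_pow_eq {K : Type*} [Field K] [CharZero K] (n : ℕ) (t : ℕ → K) :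
    ∃ f : K[X], f.Monic ∧ f.natDegree = n ∧
      ∀ M : Matrix (Fin n) (Fin n) K, M.charpoly = f →
        ∀ k ∈ Set.Icc 1 n, (M ^ k).trace = t k := by
  set f : K[X] := ∑ i ∈ Finset.range (n + 1), C (newtonCoeff t (n - i)) * X ^ i with hf
  have hcoeff (k : ℕ) (hk : k ≤ n) : f.coeff (n - k) = newtonCoeff t k := by
    simp [hf, coeff_C_mul, coeff_X_pow, Nat.sub_sub_self hk, Nat.lt_succ_of_le (Nat.sub_le n k)]
  have hdeg : f.natDegree ≤ n := natDegree_sum_le_of_forall_le _ _ fun i hi ↦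
    (natDegree_C_mul_X_pow_le _ _).trans (Nat.lt_succ_iff.1 (Finset.mem_range.1 hi))
  have hlead : f.coeff n = 1 := by simpa [newtonCoeff] using hcoeff 0 n.zero_le
  have hmonic : f.Monic := monic_of_natDegree_le_of_coeff_eq_one n hdeg hlead
  refine ⟨f, hmonic, hdeg.antisymm (le_natDegree_of_ne_zero (by simp [hlead])), ?_⟩
  intro M hM k hk
  refine eq_of_newton_rec (e := newtonCoeff t) (s := fun k ↦ (M ^ k).trace) (by rw [newtonCoeff])
    (fun k hk ↦ ?_) hk
  have h := newton_charpoly M (k := k) (by simpa using hk)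
  rw [hM, Fintype.card_fin, hcoeff k hk, newtonCoeff_rec, neg_inj] at h
  rw [h]
  refine Finset.sum_congr rfl fun i hi ↦ ?_
  rw [hcoeff i ((Finset.mem_range.1 hi).le.trans hk)]

end Newton

section Cyclic

open Polynomial

variable {n : ℕ}

/-- The first standard basis vector, which is `0` when `n = 0`. -/
def firstVec (R : Type*) [Zero R] [One R] (n : ℕ) : Fin n → R :=
  fun i ↦ if (i : ℕ) = 0 then 1 else 0

theorem firstVec_eq_single (R : Type*) [Zero R] [One R] (hn : 0 < n) :
    firstVec R n = Pi.single ⟨0, hn⟩ 1 := by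
  ext i
  simp [firstVec, Pi.single_apply, Fin.ext_iff]

theorem exists_charpoly_eq_minpoly_and_pow_mulVec_firstVec {R S : Type*} [CommRing R]
    [CommRing S] [Algebra R S] (b : PowerBasis R S) :
    ∃ M : Matrix (Fin b.dim) (Fin b.dim) R, M.charpoly = minpoly R b.gen ∧
      ∀ j : Fin b.dim, M ^ (j : ℕ) *ᵥ firstVec R b.dim = Pi.single j 1 := by
  have hone (h : 0 < b.dim) : b.basis.repr 1 = Finsupp.single ⟨0, h⟩ 1 := by
    rw [← b.basis.repr_self, b.basis_eq_pow, pow_zero]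
  have hfirst : firstVec R b.dim = b.basis.repr 1 := by
    ext i
    simp [hone i.pos, firstVec, Finsupp.single_apply, Fin.ext_iff, eq_comm]
  refine ⟨Algebra.leftMulMatrix b.basis b.gen, charpoly_leftMulMatrix b, fun j ↦ ?_⟩
  rw [hfirst, ← map_pow, Algebra.leftMulMatrix_mulVec_repr, mul_one, ← b.basis_eq_pow,
    b.basis.repr_self, Finsupp.single_eq_pi_single]

theorem exists_charpoly_eq_and_pow_mulVec_firstVec {K : Type*} [Field K] {f : K[X]} (hf : f.Monic)
    (hn : f.natDegree = n) :
    ∃ M : Matrix (Fin n) (Fin n) K, M.charpoly = f ∧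
      ∀ j : Fin n, M ^ (j : ℕ) *ᵥ firstVec K n = Pi.single j 1 := by
  have h :=
    exists_charpoly_eq_minpoly_and_pow_mulVec_firstVec (AdjoinRoot.powerBasis hf.ne_zero)
  rwa [AdjoinRoot.minpoly_powerBasis_gen_of_monic hf, AdjoinRoot.powerBasis_dim, hn] at h

end Cyclic

section FunctionAlgebra

variable {Y σ : Type*}

theorem aeval_fun_apply {R : Type*} [CommRing R] (f : σ → Y → R) (q : MvPolynomial σ R) (y : Y) :
    MvPolynomial.aeval f q y = MvPolynomial.eval (fun i ↦ f i y) q :=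
  MvPolynomial.comp_aeval_apply f (Pi.evalAlgHom R (fun _ ↦ R) y) q

theorem algebraicIndependent_of_surjective {R : Type*} [CommRing R] [IsDomain R] [Infinite R]
    {f : σ → Y → R} (hf : Function.Surjective fun y i ↦ f i y) : AlgebraicIndependent R f := by
  rw [algebraicIndependent_iff]
  refine fun q hq ↦ MvPolynomial.funext fun c ↦ ?_
  obtain ⟨y, rfl⟩ := hf c
  rw [← aeval_fun_apply, hq, Pi.zero_apply, map_zero]

variable {K : Type*} [Field K] [IsAlgClosed K] [Finite σ]

theorem dvd_of_prime_of_forall_eval_eq_zero {l q : MvPolynomial σ K} (hl : Prime l)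
    (h : ∀ c, MvPolynomial.eval c l = 0 → MvPolynomial.eval c q = 0) : l ∣ q := by
  have hprime : (Ideal.span {l}).IsPrime := (Ideal.span_singleton_prime hl.ne_zero).2 hl
  rw [← Ideal.mem_span_singleton,
    ← MvPolynomial.IsPrime.vanishingIdeal_zeroLocus (K := K) (Ideal.span {l}),
    MvPolynomial.mem_vanishingIdeal_iff, MvPolynomial.zeroLocus_span]
  exact fun c hc ↦ h c (hc l rfl)

theorem mem_adjoin_range_of_mul_mem {f : σ → Y → K}
    (hf : Function.Surjective fun y i ↦ f i y) {A : Subalgebra K (Y → K)} [NoZeroDivisors A]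
    (hfA : ∀ i, f i ∈ A) {d F : Y → K} (hd : d ∈ Algebra.adjoin K (Set.range f)) (hd0 : d ≠ 0)
    (hF : F ∈ A) (h : d * F ∈ Algebra.adjoin K (Set.range f)) :
    F ∈ Algebra.adjoin K (Set.range f) := by
  have hindep := algebraicIndependent_of_surjective hf
  have hA (q : MvPolynomial σ K) : MvPolynomial.aeval f q ∈ A :=
    Algebra.adjoin_le (Set.range_subset_iff.2 hfA)
      (Algebra.adjoin_range_eq_range_aeval K f ▸ AlgHom.mem_range_self _ q)
  simp only [Algebra.adjoin_range_eq_range_aeval, AlgHom.mem_range] at hd h ⊢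
  obtain ⟨q, rfl⟩ := hd
  induction q using UniqueFactorizationMonoid.induction_on_prime with
  | h₁ => exact absurd (map_zero _) hd0
  | h₂ u hu =>
    obtain ⟨r, hr⟩ := h
    obtain ⟨w, hw⟩ := hu.exists_left_inv
    exact ⟨w * r, by rw [map_mul, hr, ← mul_assoc, ← map_mul, hw, map_one, one_mul]⟩
  | h₃ a l ha hl ih =>
    obtain ⟨r, hr⟩ := h
    obtain ⟨s, rfl⟩ : l ∣ r := by
      refine dvd_of_prime_of_forall_eval_eq_zero hl fun c hc ↦ ?_
      obtain ⟨y, rfl⟩ := hf c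
      rw [← aeval_fun_apply, hr, Pi.mul_apply, map_mul, Pi.mul_apply, aeval_fun_apply _ l, hc,
        zero_mul, zero_mul]
    have hl0 : (⟨_, hA l⟩ : A) ≠ 0 := by
      simpa [Subtype.ext_iff] using (map_ne_zero_iff _ hindep).2 hl.ne_zero
    have hcancel : (⟨_, hA l⟩ : A) * ⟨_, hA s⟩ = ⟨_, hA l⟩ * (⟨_, hA a⟩ * ⟨_, hF⟩) := by
      simpa [Subtype.ext_iff, mul_assoc] using hr
    exact ih (by simpa using hindep.ne ha) ⟨s, congrArg Subtype.val (mul_left_cancel₀ hl0 hcancel)⟩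

end FunctionAlgebra

section LinearForms

open Polynomial

variable {R V : Type*} [CommRing R] [AddCommGroup V] [Module R V]

theorem exists_eval_eq_of_mem_adjoin_dual {s : Set (Module.Dual R V)} {F : V → R}
    (hF : F ∈ Algebra.adjoin R ((⇑) '' s : Set (V → R))) (a b : V) :
    ∃ p : R[X], ∀ t : R, F (a + t • b) = p.eval t := by
  induction hF using Algebra.adjoin_induction with
  | mem F hF =>
    obtain ⟨φ, -, rfl⟩ := hF
    exact ⟨C (φ a) + C (φ b) * X, by simp [mul_comm (φ b)]⟩
  | algebraMap c => exact ⟨C c, by simp⟩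
  | add F G _ _ hF hG =>
    obtain ⟨p, hp⟩ := hF
    obtain ⟨q, hq⟩ := hG
    exact ⟨p + q, by simp [hp, hq]⟩
  | mul F G _ _ hF hG =>
    obtain ⟨p, hp⟩ := hF
    obtain ⟨q, hq⟩ := hG
    exact ⟨p * q, by simp [hp, hq]⟩

theorem noZeroDivisors_adjoin_dual [IsDomain R] [Infinite R] (s : Set (Module.Dual R V)) :
    NoZeroDivisors (Algebra.adjoin R ((⇑) '' s : Set (V → R))) where
  eq_zero_or_eq_zero_of_mul_eq_zero {F G} h := by
    by_contra! hne
    obtain ⟨a, ha⟩ := Function.ne_iff.1 (Subtype.coe_ne_coe.2 hne.1)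
    obtain ⟨b, hb⟩ := Function.ne_iff.1 (Subtype.coe_ne_coe.2 hne.2)
    obtain ⟨p, hp⟩ := exists_eval_eq_of_mem_adjoin_dual F.2 a (b - a)
    obtain ⟨q, hq⟩ := exists_eval_eq_of_mem_adjoin_dual G.2 a (b - a)
    have hpq : p * q = 0 := by
      refine Polynomial.funext fun t ↦ ?_
      rw [eval_mul, ← hp, ← hq, eval_zero]
      exact congrFun (congrArg Subtype.val h) _
    rcases mul_eq_zero.1 hpq with rfl | rfl
    · exact ha (by simpa using hp 0)
    · exact hb (by simpa using hq 1)

end LinearForms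

section Symplectic

open Polynomial LieAlgebra.Symplectic

variable {l R : Type*} [Fintype l] [DecidableEq l] [CommRing R]

/-- The standard symplectic form. Mathlib's `J` has blocks `[[0, -1], [1, 0]]`, so the sign makes
the first copy of `l` pair positively with the second one. -/
def sympForm (u w : l ⊕ l → R) : R := u ⬝ᵥ (-J l R) *ᵥ w

/-- The moment `⟨v, x ^ (2 * m + 1) v⟩` of `v` with respect to `x`. -/
def oddMoment (x : Matrix (l ⊕ l) (l ⊕ l) R) (v : l ⊕ l → R) (m : ℕ) : R :=
  sympForm v (x ^ (2 * m + 1) *ᵥ v)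

omit [Fintype l] in
theorem neg_J_eq_fromBlocks : -J l R = fromBlocks 0 1 (-1) 0 := by
  simp [J, fromBlocks_neg]

theorem sympForm_self (u : l ⊕ l → R) : sympForm u u = 0 := by
  obtain ⟨a, b, rfl⟩ : ∃ a b, u = Sum.elim a b := ⟨_, _, (Sum.elim_comp_inl_inr u).symm⟩
  simp [sympForm, neg_J_eq_fromBlocks, fromBlocks_mulVec, neg_mulVec, dotProduct_comm]

theorem mem_sp_iff {x : Matrix (l ⊕ l) (l ⊕ l) R} : x ∈ sp l R ↔ xᵀ * J l R = J l R * -x :=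
  mem_skewAdjointMatricesSubmodule _ _

theorem fromBlocks_mem_sp {Q B : Matrix l l R} (hQ : Q.IsSymm) (hB : B.IsSymm) :
    fromBlocks 0 Q B 0 ∈ sp l R := by
  rw [mem_sp_iff, J, fromBlocks_transpose, fromBlocks_neg, fromBlocks_multiply,
    fromBlocks_multiply, hQ, hB]
  simp

theorem transpose_pow_mul_J {x : Matrix (l ⊕ l) (l ⊕ l) R} (hx : x ∈ sp l R) (k : ℕ) :
    (x ^ k)ᵀ * J l R = J l R * (-x) ^ k := by
  rw [transpose_pow]
  exact ((SemiconjBy.pow_right (mem_sp_iff.1 hx).symm k)).symm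

theorem transpose_aeval_mul_J {x : Matrix (l ⊕ l) (l ⊕ l) R} (hx : x ∈ sp l R) (p : R[X]) :
    (aeval x p)ᵀ * J l R = J l R * aeval (-x) p := by
  simp only [aeval_eq_sum_range, transpose_sum, transpose_smul, Finset.sum_mul, Finset.mul_sum,
    smul_mul_assoc, mul_smul_comm, transpose_pow_mul_J hx]

theorem sympForm_aeval_mulVec {x : Matrix (l ⊕ l) (l ⊕ l) R} (hx : x ∈ sp l R) (p : R[X])
    (u w : l ⊕ l → R) :
    sympForm (aeval x p *ᵥ u) w = sympForm u (aeval (-x) p *ᵥ w) := by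
  rw [sympForm, sympForm, ← vecMul_transpose, ← dotProduct_mulVec, mulVec_mulVec, mulVec_mulVec,
    mul_neg, transpose_aeval_mul_J hx, neg_mul]

theorem sympForm_pow_mulVec_pow_mulVec {x : Matrix (l ⊕ l) (l ⊕ l) R} (hx : x ∈ sp l R) (a b : ℕ)
    (v : l ⊕ l → R) :
    sympForm (x ^ a *ᵥ v) (x ^ b *ᵥ v) = (-1) ^ a * sympForm v (x ^ (a + b) *ᵥ v) := by
  have h := sympForm_aeval_mulVec hx (X ^ a) v (x ^ b *ᵥ v)
  rwa [map_pow, map_pow, aeval_X, aeval_X, ← neg_one_smul R x, _root_.smul_pow, smul_mulVec,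
    mulVec_mulVec, ← pow_add, sympForm, sympForm, mulVec_smul, dotProduct_smul, smul_eq_mul] at h

theorem sympForm_pow_mulVec_of_even {x : Matrix (l ⊕ l) (l ⊕ l) R} (hx : x ∈ sp l R) {k : ℕ}
    (hk : Even k) (v : l ⊕ l → R) : sympForm v (x ^ k *ᵥ v) = 0 := by
  obtain ⟨m, rfl⟩ := hk
  have h := sympForm_pow_mulVec_pow_mulVec hx m m v
  rw [sympForm_self] at h
  rcases neg_one_pow_eq_or R m with hm | hm <;> simpa [hm] using h.symm

theorem trace_pow_eq_zero_of_odd [IsAddTorsionFree R] {x : Matrix (l ⊕ l) (l ⊕ l) R}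
    (hx : x ∈ sp l R) {k : ℕ} (hk : Odd k) : (x ^ k).trace = 0 := by
  have h : (x ^ k)ᵀ = -(J l R * x ^ k * (J l R)⁻¹) := by
    rw [← mul_nonsing_inv_cancel_right _ (x ^ k)ᵀ (isUnit_det_J l R), transpose_pow_mul_J hx,
      hk.neg_pow]
    simp
  have h := congrArg Matrix.trace h
  rw [trace_transpose, trace_neg, trace_mul_cycle, nonsing_inv_mul _ (isUnit_det_J l R),
    one_mul] at h
  exact self_eq_neg.1 h

theorem oddMoment_aeval_mulVec {x : Matrix (l ⊕ l) (l ⊕ l) R} (hx : x ∈ sp l R) {p H : R[X]}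
    (hp : p * p.comp (-X) = H.comp (X ^ 2)) (v : l ⊕ l → R) (m : ℕ) :
    oddMoment x (aeval x p *ᵥ v) m = H.sum fun j c ↦ c * oddMoment x v (j + m) := by
  have key : aeval (-x) p * x ^ (2 * m + 1) * aeval x p =
      H.sum fun j c ↦ c • x ^ (2 * (j + m) + 1) := by
    have hneg : aeval (-x) p = aeval x (p.comp (-X)) := by simp [aeval_comp]
    have hpow : x ^ (2 * m + 1) = aeval x (X ^ (2 * m + 1) : R[X]) := by simp
    rw [hneg, hpow, ← map_mul, ← map_mul, mul_assoc, mul_left_comm, mul_comm (p.comp _), hp,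
      map_mul, ← hpow, aeval_comp, aeval_eq_sum_range]
    simp only [Polynomial.sum_over_range, Finset.mul_sum, zero_smul, implies_true,
      mul_smul_comm, map_pow, aeval_X, ← pow_mul, ← pow_add]
    refine Finset.sum_congr rfl fun j _ ↦ ?_
    ring_nf
  rw [oddMoment, sympForm_aeval_mulVec hx, mulVec_mulVec, mulVec_mulVec, key]
  simp only [Polynomial.sum, oddMoment, sympForm, sum_mulVec, smul_mulVec, mulVec_sum, mulVec_smul,
    dotProduct_sum, dotProduct_smul, smul_eq_mul]

end Symplectic

section SubalgebraMatrix

open LieAlgebra.Symplectic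

variable {K A ι : Type*} [CommRing K] [CommRing A] [Algebra K A] [Fintype ι] [DecidableEq ι]
  {S : Subalgebra K A} {M : Matrix ι ι A}

theorem det_mem_of_mem_matrix (hM : M ∈ S.matrix) : M.det ∈ S := by
  rw [det_apply']
  exact sum_mem fun σ _ ↦ mul_mem (intCast_mem S _) (prod_mem fun i _ ↦ hM _ _)

theorem adjugate_mem_matrix (hM : M ∈ S.matrix) : M.adjugate ∈ S.matrix := by
  intro i j
  rw [adjugate_apply]
  refine det_mem_of_mem_matrix fun a b ↦ ?_
  rw [updateRow_apply, Pi.single_apply]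
  split_ifs
  exacts [one_mem S, zero_mem S, hM a b]

theorem trace_mem_of_mem_matrix (hM : M ∈ S.matrix) : M.trace ∈ S :=
  sum_mem fun i _ ↦ hM i i

theorem mulVec_mem_of_mem_matrix (hM : M ∈ S.matrix) {v : ι → A} (hv : ∀ i, v i ∈ S) (i : ι) :
    (M *ᵥ v) i ∈ S :=
  sum_mem fun j _ ↦ mul_mem (hM i j) (hv j)

theorem oddMoment_mem_of_mem_matrix {x : Matrix (ι ⊕ ι) (ι ⊕ ι) A} (hx : x ∈ S.matrix)
    {v : ι ⊕ ι → A} (hv : ∀ i, v i ∈ S) (m : ℕ) : oddMoment x v m ∈ S := by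
  have hJ : -J ι A ∈ S.matrix := by
    rw [neg_J_eq_fromBlocks]
    rintro (i | i) (j | j)
    exacts [zero_mem S, one_mem S.matrix i j, neg_mem (one_mem S.matrix) i j, zero_mem S]
  exact sum_mem fun i _ ↦ mul_mem (hv i) <| mulVec_mem_of_mem_matrix hJ
    (mulVec_mem_of_mem_matrix (pow_mem hx _) hv) i

end SubalgebraMatrix

section Action

open LieAlgebra.Symplectic

variable {l R : Type*} [Fintype l] [DecidableEq l] [CommRing R]

omit [Fintype l] in
theorem map_J {S : Type*} [CommRing S] (f : R →+* S) : (J l R).map f = J l S := by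
  simp [J, fromBlocks_map, Matrix.map_neg]

theorem map_oddMoment {S : Type*} [CommRing S] (f : R →+* S) (x : Matrix (l ⊕ l) (l ⊕ l) R)
    (v : l ⊕ l → R) (m : ℕ) : f (oddMoment x v m) = oddMoment (x.map f) (f ∘ v) m := by
  have hmul (M : Matrix (l ⊕ l) (l ⊕ l) R) (w : l ⊕ l → R) : f ∘ (M *ᵥ w) = M.map f *ᵥ (f ∘ w) :=
    funext (f.map_mulVec M w)
  rw [oddMoment, sympForm, f.map_dotProduct, hmul, hmul, Matrix.map_neg _ (map_neg f),
    map_J, Matrix.map_pow]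
  rfl

theorem conj_nonsing_inv_pow {g : Matrix l l R} (hg : IsUnit g.det) (x : Matrix l l R) (k : ℕ) :
    (g * x * g⁻¹) ^ k = g * x ^ k * g⁻¹ := by
  have h : SemiconjBy g x (g * x * g⁻¹) := (nonsing_inv_mul_cancel_right _ _ hg).symm
  rw [(h.pow_right k).eq, mul_nonsing_inv_cancel_right _ _ hg]

theorem trace_conj_pow {g : Matrix l l R} (hg : IsUnit g.det) (x : Matrix l l R) (k : ℕ) :
    ((g * x * g⁻¹) ^ k).trace = (x ^ k).trace := by
  rw [conj_nonsing_inv_pow hg, trace_mul_cycle, nonsing_inv_mul _ hg, Matrix.one_mul]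

variable {g : Matrix (l ⊕ l) (l ⊕ l) R}

theorem semiconjBy_J_inv_transpose (hg : g ∈ symplecticGroup l R) : SemiconjBy (J l R) g⁻¹ gᵀ := by
  rw [SemiconjBy, ← SymplecticGroup.mem_iff'.1 hg,
    mul_nonsing_inv_cancel_right _ _ (SymplecticGroup.symplectic_det hg),
    SymplecticGroup.mem_iff'.1 hg]

theorem conj_mem_sp (hg : g ∈ symplecticGroup l R) {x : Matrix (l ⊕ l) (l ⊕ l) R}
    (hx : x ∈ sp l R) : g * x * g⁻¹ ∈ sp l R := by
  have hginv : g⁻¹ ∈ symplecticGroup l R :=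
    SymplecticGroup.coe_inv' ⟨g, hg⟩ ▸ (⟨g, hg⟩⁻¹ : symplecticGroup l R).2
  have hinv := semiconjBy_J_inv_transpose hginv
  rw [nonsing_inv_nonsing_inv _ (SymplecticGroup.symplectic_det hg)] at hinv
  have hx : SemiconjBy (J l R) (-x) xᵀ := (mem_sp_iff.1 hx).symm
  have h := (hinv.mul_right hx).mul_right (semiconjBy_J_inv_transpose hg)
  rw [mem_sp_iff, transpose_mul, transpose_mul, ← mul_assoc, ← h.eq]
  simp

theorem sympForm_mulVec_mulVec (hg : g ∈ symplecticGroup l R) (u w : l ⊕ l → R) :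
    sympForm (g *ᵥ u) (g *ᵥ w) = sympForm u w := by
  rw [sympForm, ← vecMul_transpose, ← dotProduct_mulVec, mulVec_mulVec, mulVec_mulVec, sympForm,
    mul_neg, neg_mul, SymplecticGroup.mem_iff'.1 hg]

theorem oddMoment_conj (hg : g ∈ symplecticGroup l R) (x : Matrix (l ⊕ l) (l ⊕ l) R)
    (v : l ⊕ l → R) (m : ℕ) : oddMoment (g * x * g⁻¹) (g *ᵥ v) m = oddMoment x v m := by
  have hdet := SymplecticGroup.symplectic_det hg
  rw [oddMoment, conj_nonsing_inv_pow hdet, mulVec_mulVec, nonsing_inv_mul_cancel_right _ _ hdet,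
    ← mulVec_mulVec, sympForm_mulVec_mulVec hg, oddMoment]

end Action

section NormalForm

open LieAlgebra.Symplectic

/-- The Hankel matrix of a sequence. -/
def hankel {R : Type*} (n : ℕ) (b : ℕ → R) : Matrix (Fin n) (Fin n) R :=
  of fun i j ↦ b (i + j)

variable {R : Type*} [CommRing R] {n : ℕ}

omit [CommRing R] in
theorem hankel_isSymm (n : ℕ) (b : ℕ → R) : (hankel n b).IsSymm := by
  ext i j
  simp [hankel, add_comm]

theorem isUnit_det_hankel {b : ℕ → R} (hlt : ∀ m, m + 1 < n → b m = 0)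
    (heq : ∀ m, m + 1 = n → b m = 1) : IsUnit (hankel n b).det := by
  have htri : ((hankel n b).submatrix Fin.revPerm id).IsUpperTriangular := by
    intro i j hij
    have hij : (j : ℕ) < i := hij
    exact hlt _ (by simp only [Fin.revPerm_apply, Fin.val_rev, id]; omega)
  have hdiag (i : Fin n) : (hankel n b).submatrix Fin.revPerm id i i = 1 := by
    exact heq _ (by simp only [Fin.revPerm_apply, Fin.val_rev, id]; omega)
  have hdet := det_permute Fin.revPerm (hankel n b)
  rw [det_of_isUpperTriangular htri, Finset.prod_congr rfl fun i _ ↦ hdiag i,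
    Finset.prod_const_one] at hdet
  exact .of_mul_eq_one_right _ hdet.symm

theorem hankel_add_eq_mul_pow {M : Matrix (Fin n) (Fin n) R} {u : Fin n → R}
    (hu : ∀ j : Fin n, M ^ (j : ℕ) *ᵥ u = Pi.single j 1) (w : Fin n → R) (s : ℕ) :
    (hankel n fun m ↦ w ⬝ᵥ M ^ (m + s) *ᵥ u) = hankel n (fun m ↦ w ⬝ᵥ M ^ m *ᵥ u) * M ^ s := by
  have row (s : ℕ) (i : Fin n) :
      (hankel n fun m ↦ w ⬝ᵥ M ^ (m + s) *ᵥ u) i = w ᵥ* M ^ (i + s : ℕ) := by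
    ext j
    rw [hankel, of_apply, add_right_comm, pow_add, ← mulVec_mulVec, hu, dotProduct_mulVec,
      dotProduct_single_one]
  funext i
  rw [mul_apply_eq_vecMul, row s i, pow_add, ← vecMul_vecMul]
  exact congrArg (· ᵥ* M ^ s) (row 0 i).symm

/-- The normal form of an element of `𝔰𝔭` whose cyclic vector `(e₀, 0)` has moments `b`. It lies
in `𝔰𝔭` even when the Hankel matrix is singular. -/
noncomputable def spSection (n : ℕ) (b : ℕ → R) : Matrix (Fin n ⊕ Fin n) (Fin n ⊕ Fin n) R :=
  fromBlocks 0 ((hankel n b)⁻¹ * (hankel n fun m ↦ b (m + 1)) * (hankel n b)⁻¹) (hankel n b) 0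

theorem spSection_mem_sp (n : ℕ) (b : ℕ → R) : spSection n b ∈ sp (Fin n) R := by
  have hinv : (hankel n b)⁻¹.IsSymm := by
    rw [IsSymm, transpose_nonsing_inv, hankel_isSymm]
  refine fromBlocks_mem_sp ?_ (hankel_isSymm n b)
  rw [IsSymm, transpose_mul, transpose_mul, hinv, hankel_isSymm, mul_assoc]

theorem fromBlocks_zero_zero_pow_two_mul {l : Type*} [Fintype l] [DecidableEq l]
    (Q B : Matrix l l R) (k : ℕ) :
    fromBlocks 0 Q B 0 ^ (2 * k) = fromBlocks ((Q * B) ^ k) 0 0 ((B * Q) ^ k) := by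
  rw [pow_mul, sq, fromBlocks_multiply, ← fromBlocks_diagonal_pow]
  simp

theorem trace_mul_pow_comm {l : Type*} [Fintype l] [DecidableEq l] (A B : Matrix l l R) (k : ℕ) :
    ((A * B) ^ k).trace = ((B * A) ^ k).trace := by
  cases k with
  | zero => simp
  | succ k =>
    rw [pow_succ, ← mul_assoc, mul_pow_mul, trace_mul_comm, ← mul_assoc, ← pow_succ']

theorem trace_fromBlocks_zero_zero_pow {l : Type*} [Fintype l] [DecidableEq l]
    (Q B : Matrix l l R) (k : ℕ) :
    (fromBlocks 0 Q B 0 ^ (2 * k)).trace = 2 * ((Q * B) ^ k).trace := by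
  rw [fromBlocks_zero_zero_pow_two_mul, two_mul, Matrix.trace, Fintype.sum_sum_type]
  exact congrArg₂ _ rfl (trace_mul_pow_comm B Q k)

theorem oddMoment_fromBlocks {l : Type*} [Fintype l] [DecidableEq l] (Q B : Matrix l l R)
    (w : l → R) (m : ℕ) :
    oddMoment (fromBlocks 0 Q B 0) (Sum.elim w 0) m = w ⬝ᵥ (B * (Q * B) ^ m) *ᵥ w := by
  rw [oddMoment, pow_succ', fromBlocks_zero_zero_pow_two_mul, fromBlocks_multiply, sympForm,
    neg_J_eq_fromBlocks]
  simp [fromBlocks_mulVec]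

/-- The exponents of the columns of `krylov`: even ones in the first block, odd ones in the
second. -/
def krylovExponent : Fin n ⊕ Fin n → ℕ :=
  Sum.elim (fun i ↦ 2 * (i : ℕ)) (fun i ↦ 2 * (i : ℕ) + 1)

/-- The matrix with columns `v, x² v, x⁴ v, …` followed by `x v, x³ v, x⁵ v, …`. -/
def krylov {l : Type*} [Fintype l] [DecidableEq l] (n : ℕ) (x : Matrix l l R) (v : l → R) :
    Matrix l (Fin n ⊕ Fin n) R :=
  of fun r c ↦ (x ^ krylovExponent c *ᵥ v) r

section Krylov

variable {l : Type*} [Fintype l] [DecidableEq l] {x : Matrix (l ⊕ l) (l ⊕ l) R}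

theorem transpose_krylov_mul_neg_J_mul_pow_mul_krylov_apply (hx : x ∈ sp l R) (v : l ⊕ l → R)
    (s : ℕ) (a c : Fin n ⊕ Fin n) :
    ((krylov n x v)ᵀ * -J l R * (x ^ s * krylov n x v)) a c = (-1) ^ krylovExponent a *
      sympForm v (x ^ (krylovExponent a + (s + krylovExponent c)) *ᵥ v) := by
  have hcol : (x ^ s * krylov n x v)ᵀ c = x ^ (s + krylovExponent c) *ᵥ v := by
    rw [pow_add, ← mulVec_mulVec]
    rfl
  calc ((krylov n x v)ᵀ * -J l R * (x ^ s * krylov n x v)) a c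
    _ = sympForm (x ^ krylovExponent a *ᵥ v) ((x ^ s * krylov n x v)ᵀ c) := by
      rw [Matrix.mul_assoc, mul_apply]
      rfl
    _ = _ := by rw [hcol, sympForm_pow_mulVec_pow_mulVec hx]

theorem transpose_krylov_mul_neg_J_mul_krylov (hx : x ∈ sp l R) (v : l ⊕ l → R) :
    (krylov n x v)ᵀ * -J l R * krylov n x v =
      fromBlocks 0 (hankel n (oddMoment x v)) (-hankel n (oddMoment x v)) 0 := by
  ext a c
  have h := transpose_krylov_mul_neg_J_mul_pow_mul_krylov_apply hx v 0 a c
  rw [pow_zero, Matrix.one_mul] at h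
  rw [h]
  rcases a with i | i <;> rcases c with j | j
  · simp [krylovExponent, sympForm_pow_mulVec_of_even hx, parity_simps]
  · simp [krylovExponent, hankel, oddMoment, mul_add, add_assoc]
  · simp [krylovExponent, hankel, oddMoment, mul_add, add_right_comm, pow_succ]
  · simp [krylovExponent, sympForm_pow_mulVec_of_even hx, parity_simps]

theorem transpose_krylov_mul_neg_J_mul_mul_krylov (hx : x ∈ sp l R) (v : l ⊕ l → R) :
    (krylov n x v)ᵀ * -J l R * (x * krylov n x v) =
      fromBlocks (hankel n (oddMoment x v)) 0 0 (-hankel n fun m ↦ oddMoment x v (m + 1)) := by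
  ext a c
  have h := transpose_krylov_mul_neg_J_mul_pow_mul_krylov_apply hx v 1 a c
  rw [pow_one] at h
  rw [h]
  rcases a with i | i <;> rcases c with j | j
  · simp [krylovExponent, hankel, oddMoment, mul_add, add_left_comm, add_comm]
  · simp [krylovExponent, sympForm_pow_mulVec_of_even hx, parity_simps]
  · simp [krylovExponent, sympForm_pow_mulVec_of_even hx, parity_simps]
  · have hexp : 2 * (i : ℕ) + 1 + (1 + (2 * j + 1)) = 2 * (i + j + 1) + 1 := by ring
    simp [krylovExponent, hankel, oddMoment, hexp, pow_succ (-1 : R)]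

end Krylov

/-- The Krylov matrix with its second block of columns normalized by the inverse Hankel matrix of
the moments, so that it becomes symplectic. -/
noncomputable def krylovFrame {n : ℕ} (x : Matrix (Fin n ⊕ Fin n) (Fin n ⊕ Fin n) R)
    (v : Fin n ⊕ Fin n → R) : Matrix (Fin n ⊕ Fin n) (Fin n ⊕ Fin n) R :=
  krylov n x v * fromBlocks 1 0 0 (hankel n (oddMoment x v))⁻¹

section KrylovFrame

variable {x : Matrix (Fin n ⊕ Fin n) (Fin n ⊕ Fin n) R} {v : Fin n ⊕ Fin n → R}

theorem transpose_krylovFrame :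
    (krylovFrame x v)ᵀ = fromBlocks 1 0 0 (hankel n (oddMoment x v))⁻¹ * (krylov n x v)ᵀ := by
  rw [krylovFrame, transpose_mul, fromBlocks_transpose, transpose_nonsing_inv, hankel_isSymm]
  simp

theorem krylovFrame_mulVec_firstVec : krylovFrame x v *ᵥ Sum.elim (firstVec R n) 0 = v := by
  ext i
  have hn : 0 < n := Sum.elim Fin.pos Fin.pos i
  have hsingle : Sum.elim (firstVec R n) (0 : Fin n → R) = Pi.single (Sum.inl ⟨0, hn⟩) 1 := by
    rw [firstVec_eq_single R hn, Sum.elim_single_zero]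
  have hfix : fromBlocks 1 0 0 (hankel n (oddMoment x v))⁻¹ *ᵥ Sum.elim (firstVec R n) 0 =
      Sum.elim (firstVec R n) 0 := by
    simp [fromBlocks_mulVec]
  rw [krylovFrame, ← mulVec_mulVec, hfix, hsingle, mulVec_single_one]
  simp [krylov, krylovExponent]

theorem transpose_krylovFrame_mul_neg_J_mul_krylovFrame (hx : x ∈ sp (Fin n) R)
    (hdet : IsUnit (hankel n (oddMoment x v)).det) :
    (krylovFrame x v)ᵀ * -J (Fin n) R * krylovFrame x v = -J (Fin n) R := by
  calc (krylovFrame x v)ᵀ * -J (Fin n) R * krylovFrame x v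
    _ = fromBlocks 1 0 0 (hankel n (oddMoment x v))⁻¹ *
          ((krylov n x v)ᵀ * -J (Fin n) R * krylov n x v) *
          fromBlocks 1 0 0 (hankel n (oddMoment x v))⁻¹ := by
      rw [transpose_krylovFrame, krylovFrame]
      simp only [mul_assoc]
    _ = -J (Fin n) R := by
      rw [transpose_krylov_mul_neg_J_mul_krylov hx, neg_J_eq_fromBlocks, fromBlocks_multiply,
        fromBlocks_multiply]
      simp [mul_nonsing_inv _ hdet, nonsing_inv_mul _ hdet]

theorem transpose_krylovFrame_mul_neg_J_mul_mul_krylovFrame (hx : x ∈ sp (Fin n) R) :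
    (krylovFrame x v)ᵀ * -J (Fin n) R * (x * krylovFrame x v) =
      -J (Fin n) R * spSection n (oddMoment x v) := by
  calc (krylovFrame x v)ᵀ * -J (Fin n) R * (x * krylovFrame x v)
    _ = fromBlocks 1 0 0 (hankel n (oddMoment x v))⁻¹ *
          ((krylov n x v)ᵀ * -J (Fin n) R * (x * krylov n x v)) *
          fromBlocks 1 0 0 (hankel n (oddMoment x v))⁻¹ := by
      rw [transpose_krylovFrame, krylovFrame]
      simp only [mul_assoc]
    _ = -J (Fin n) R * spSection n (oddMoment x v) := by
      rw [transpose_krylov_mul_neg_J_mul_mul_krylov hx, neg_J_eq_fromBlocks, spSection,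
        fromBlocks_multiply, fromBlocks_multiply, fromBlocks_multiply]
      simp

theorem krylovFrame_mem_symplecticGroup (hx : x ∈ sp (Fin n) R)
    (hdet : IsUnit (hankel n (oddMoment x v)).det) :
    krylovFrame x v ∈ symplecticGroup (Fin n) R := by
  rw [SymplecticGroup.mem_iff']
  simpa using transpose_krylovFrame_mul_neg_J_mul_krylovFrame hx hdet

theorem mul_krylovFrame (hx : x ∈ sp (Fin n) R) (hdet : IsUnit (hankel n (oddMoment x v)).det) :
    x * krylovFrame x v = krylovFrame x v * spSection n (oddMoment x v) := by
  have hsymp := transpose_krylovFrame_mul_neg_J_mul_krylovFrame hx hdet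
  have hunit : IsUnit ((krylovFrame x v)ᵀ * -J (Fin n) R) := by
    rw [isUnit_iff_isUnit_det]
    refine isUnit_of_mul_isUnit_left (y := (krylovFrame x v).det) ?_
    rw [← det_mul, hsymp, ← isUnit_iff_isUnit_det, IsUnit.neg_iff, isUnit_iff_isUnit_det]
    exact isUnit_det_J _ _
  rw [← hunit.mul_right_inj, transpose_krylovFrame_mul_neg_J_mul_mul_krylovFrame hx, ← mul_assoc,
    hsymp]

end KrylovFrame

end NormalForm

section Surjective

open Polynomial LieAlgebra.Symplectic

variable {K : Type*} [Field K] [IsAlgClosed K]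

theorem exists_mul_comp_neg_X_eq_comp_X_sq (H : K[X]) :
    ∃ p : K[X], p * p.comp (-X) = H.comp (X ^ 2) := by
  induction IsAlgClosed.splits H using Submonoid.closure_induction with
  | mem q hq =>
    rcases hq with ⟨a, rfl⟩ | ⟨a, rfl⟩
    · obtain ⟨c, rfl⟩ := IsAlgClosed.exists_pow_nat_eq a two_pos
      exact ⟨C c, by simp [sq]⟩
    · obtain ⟨c, hc⟩ := IsAlgClosed.exists_pow_nat_eq (-1 : K) two_pos
      obtain ⟨d, hd⟩ := IsAlgClosed.exists_pow_nat_eq (-a) two_pos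
      refine ⟨C c * (X - C d), ?_⟩
      have hc : (C c : K[X]) ^ 2 = -1 := by rw [← C_pow, hc, C_neg, C_1]
      have hd : (C d : K[X]) ^ 2 = -C a := by rw [← C_pow, hd, C_neg]
      simp only [mul_comp, sub_comp, add_comp, X_comp, C_comp]
      linear_combination (-X ^ 2 + C d ^ 2) * hc - hd
  | one => exact ⟨1, by simp⟩
  | mul f g _ _ ihf ihg =>
    obtain ⟨p, hp⟩ := ihf
    obtain ⟨q, hq⟩ := ihg
    exact ⟨p * q, by rw [mul_comp, mul_comp, mul_mul_mul_comm, hp, hq]⟩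

theorem exists_oddMoment_eq {l : Type*} [Fintype l] [DecidableEq l] {n : ℕ}
    {x : Matrix (l ⊕ l) (l ⊕ l) K} (hx : x ∈ sp l K) {v : l ⊕ l → K}
    (hdet : IsUnit (hankel n (oddMoment x v)).det) (s : Fin n → K) :
    ∃ u, ∀ m : Fin n, oddMoment x u m = s m := by
  obtain ⟨H, hH⟩ := (degreeLTEquiv K n).surjective ((hankel n (oddMoment x v))⁻¹ *ᵥ s)
  obtain ⟨p, hp⟩ := exists_mul_comp_neg_X_eq_comp_X_sq (H : K[X])
  refine ⟨aeval x p *ᵥ v, fun m ↦ ?_⟩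
  calc oddMoment x (aeval x p *ᵥ v) m
    _ = ∑ j : Fin n, (H : K[X]).coeff j * oddMoment x v (j + m) := by
      rw [oddMoment_aeval_mulVec hx hp, ← sum_fin _ (by simp) (mem_degreeLT.1 H.2)]
    _ = (hankel n (oddMoment x v) *ᵥ degreeLTEquiv K n H) m :=
      Finset.sum_congr rfl fun j _ ↦ by rw [mul_comm, add_comm]; rfl
    _ = s m := by rw [hH, mulVec_mulVec, mul_nonsing_inv _ hdet, one_mulVec]

omit [IsAlgClosed K] in
theorem exists_mem_sp_trace_pow_eq_and_isUnit_det_hankel [CharZero K] (n : ℕ) (t : ℕ → K) :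
    ∃ x ∈ sp (Fin n) K, (∀ k ∈ Set.Icc 1 n, (x ^ (2 * k)).trace = t k) ∧
      ∃ v, IsUnit (hankel n (oddMoment x v)).det := by
  obtain ⟨f, hf, hdeg, htrace⟩ := exists_monic_forall_trace_pow_eq n fun k ↦ t k / 2
  obtain ⟨M, hM, hcyclic⟩ := exists_charpoly_eq_and_pow_mulVec_firstVec hf hdeg
  set w : Fin n → K := fun i ↦ if (i : ℕ) + 1 = n then 1 else 0 with hw
  set b : ℕ → K := fun m ↦ w ⬝ᵥ M ^ m *ᵥ firstVec K n with hb
  have hb_apply (m : Fin n) : b m = if (m : ℕ) + 1 = n then 1 else 0 := by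
    simp only [hb, hcyclic, dotProduct_single_one, hw]
  have hunit : IsUnit (hankel n b).det :=
    isUnit_det_hankel (fun m hm ↦ by simpa [hm.ne] using hb_apply ⟨m, by omega⟩)
      (fun m hm ↦ by simpa [hm] using hb_apply ⟨m, by omega⟩)
  have hQB : (hankel n b)⁻¹ * (hankel n fun m ↦ b (m + 1)) * (hankel n b)⁻¹ * hankel n b = M := by
    rw [nonsing_inv_mul_cancel_right _ _ hunit, hankel_add_eq_mul_pow hcyclic, pow_one,
      nonsing_inv_mul_cancel_left _ _ hunit]
  have hmoment : oddMoment (spSection n b) (Sum.elim (firstVec K n) 0) = b := by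
    ext m
    rw [spSection, oddMoment_fromBlocks, hQB, ← hankel_add_eq_mul_pow hcyclic]
    obtain rfl | hn := n.eq_zero_or_pos
    · simp [hb]
    · simp [firstVec_eq_single K hn, hankel, hb]
  refine ⟨spSection n b, spSection_mem_sp n b, fun k hk ↦ ?_, _, by rwa [hmoment]⟩
  rw [spSection, trace_fromBlocks_zero_zero_pow, hQB, htrace M hM k hk,
    mul_div_cancel₀ _ two_ne_zero]

end Surjective

section Membership

open Polynomial LieAlgebra.Symplectic

theorem pow_card_add_eq_neg_sum {ι R : Type*} [Fintype ι] [DecidableEq ι] [CommRing R]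
    (M : Matrix ι ι R) (k : ℕ) :
    M ^ (Fintype.card ι + k) =
      -∑ i ∈ Finset.range (Fintype.card ι), M.charpoly.coeff i • M ^ (i + k) := by
  nontriviality R
  have h := aeval_self_charpoly M
  rw [M.charpoly_monic.as_sum, charpoly_natDegree_eq_dim] at h
  simp only [map_add, map_sum, map_mul, map_pow, aeval_X, aeval_C, ← Algebra.smul_def] at h
  simp only [pow_add, eq_neg_of_add_eq_zero_left h, neg_mul, Finset.sum_mul, smul_mul_assoc]

variable {K A : Type*} [Field K] [CharZero K] [CommRing A] [Algebra K A] {n : ℕ}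
  {x : Matrix (Fin n ⊕ Fin n) (Fin n ⊕ Fin n) A}

theorem charpoly_coeff_mem_of_mem_sp (S : Subalgebra K A) (hx : x ∈ sp (Fin n) A)
    (htrace : ∀ k ∈ Set.Icc 1 n, (x ^ (2 * k)).trace ∈ S) (j : ℕ) : x.charpoly.coeff j ∈ S := by
  have : IsAddTorsionFree A := .of_isTorsionFree K A
  refine charpoly_coeff_mem S (fun k hk ↦ ?_) j
  rw [Fintype.card_sum, Fintype.card_fin, Set.mem_Icc] at hk
  obtain ⟨m, rfl | rfl⟩ := k.even_or_odd'
  · exact htrace m ⟨by omega, by omega⟩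
  · rw [trace_pow_eq_zero_of_odd hx (odd_two_mul_add_one m)]
    exact zero_mem S

theorem oddMoment_mem (S : Subalgebra K A) (hx : x ∈ sp (Fin n) A)
    (htrace : ∀ k ∈ Set.Icc 1 n, (x ^ (2 * k)).trace ∈ S) {v : Fin n ⊕ Fin n → A}
    (hmoment : ∀ m < n, oddMoment x v m ∈ S) (m : ℕ) : oddMoment x v m ∈ S := by
  suffices ∀ k, sympForm v (x ^ k *ᵥ v) ∈ S from this _
  intro k
  induction k using Nat.strong_induction_on with
  | _ k ih =>
    obtain heven | ⟨m, rfl⟩ := k.even_or_odd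
    · rw [sympForm_pow_mulVec_of_even hx heven]
      exact zero_mem S
    obtain hm | hm := lt_or_ge m n
    · exact hmoment m hm
    obtain ⟨j, rfl⟩ := Nat.exists_eq_add_of_le hm
    rw [show 2 * (n + j) + 1 = Fintype.card (Fin n ⊕ Fin n) + (2 * j + 1) by simp; ring,
      pow_card_add_eq_neg_sum, neg_mulVec]
    simp only [sympForm, sum_mulVec, smul_mulVec, mulVec_neg, mulVec_sum, mulVec_smul,
      dotProduct_neg, dotProduct_sum, dotProduct_smul, smul_eq_mul]
    refine neg_mem (sum_mem fun i hi ↦ ?_)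
    refine mul_mem (charpoly_coeff_mem_of_mem_sp S hx htrace i) (ih _ ?_)
    simp only [Finset.mem_range, Fintype.card_sum, Fintype.card_fin] at hi
    omega

end Membership

section Invariants

open LieAlgebra.Symplectic

variable {R : Type*} [CommRing R] {n : ℕ}

/-- The representation `𝔰𝔭(2n) ⊕ R²ⁿ`. -/
abbrev SpPair (R : Type*) [CommRing R] (n : ℕ) := sp (Fin n) R × (Fin n ⊕ Fin n → R)

/-- The linear coordinates on `SpPair R n`: matrix entries and vector coordinates. -/
def spCoord (R : Type*) [CommRing R] (n : ℕ) :
    ((Fin n ⊕ Fin n) × (Fin n ⊕ Fin n)) ⊕ (Fin n ⊕ Fin n) → Module.Dual R (SpPair R n) :=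
  Sum.elim
    (fun ij ↦ ⟨⟨fun p ↦ p.1.1 ij.1 ij.2, fun _ _ ↦ rfl⟩, fun _ _ ↦ rfl⟩)
    (fun i ↦ ⟨⟨fun p ↦ p.2 i, fun _ _ ↦ rfl⟩, fun _ _ ↦ rfl⟩)

/-- The algebra of polynomial functions on `SpPair R n`. -/
def spPolyFun (R : Type*) [CommRing R] (n : ℕ) : Subalgebra R (SpPair R n → R) :=
  Algebra.adjoin R ((⇑) '' Set.range (spCoord R n))

/-- The action of the symplectic group on `SpPair R n`. -/
noncomputable def spAct (g : symplecticGroup (Fin n) R) (p : SpPair R n) : SpPair R n :=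
  (⟨g.1 * p.1.1 * g.1⁻¹, conj_mem_sp g.2 p.1.2⟩, g.1 *ᵥ p.2)

/-- The algebra of polynomial functions on `SpPair R n` invariant under the symplectic group. -/
def spInvariants (R : Type*) [CommRing R] (n : ℕ) : Subalgebra R (SpPair R n → R) where
  carrier := {F | F ∈ spPolyFun R n ∧ ∀ g p, F (spAct g p) = F p}
  mul_mem' ha hb := ⟨mul_mem ha.1 hb.1, fun g p ↦ congrArg₂ (· * ·) (ha.2 g p) (hb.2 g p)⟩
  add_mem' ha hb := ⟨add_mem ha.1 hb.1, fun g p ↦ congrArg₂ (· + ·) (ha.2 g p) (hb.2 g p)⟩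
  algebraMap_mem' c := ⟨algebraMap_mem _ c, fun _ _ ↦ rfl⟩

/-- The functions `Tr(x²), …, Tr(x²ⁿ)` and `⟨v, xv⟩, …, ⟨v, x²ⁿ⁻¹v⟩` on `SpPair R n`. -/
def spGenerator (R : Type*) [CommRing R] (n : ℕ) : Fin n ⊕ Fin n → SpPair R n → R :=
  Sum.elim (fun k p ↦ (p.1.1 ^ (2 * (k + 1 : ℕ))).trace)
    (fun k p ↦ oddMoment p.1.1 p.2 k)

/-- The tautological matrix over the ring of functions on `SpPair R n`. -/
def spMatrix (R : Type*) [CommRing R] (n : ℕ) :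
    Matrix (Fin n ⊕ Fin n) (Fin n ⊕ Fin n) (SpPair R n → R) :=
  of fun i j p ↦ p.1.1 i j

/-- The tautological vector over the ring of functions on `SpPair R n`. -/
def spVector (R : Type*) [CommRing R] (n : ℕ) : Fin n ⊕ Fin n → SpPair R n → R :=
  fun i p ↦ p.2 i

theorem spGenerator_inl (k : Fin n) :
    spGenerator R n (.inl k) = (spMatrix R n ^ (2 * (k + 1 : ℕ))).trace := by
  funext p
  let f : (SpPair R n → R) →+* R := Pi.evalRingHom _ p
  calc (p.1.1 ^ (2 * (k + 1 : ℕ))).trace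
    _ = ((spMatrix R n ^ (2 * (k + 1 : ℕ))).map f).trace := by
      rw [Matrix.map_pow]
      rfl
    _ = f (spMatrix R n ^ (2 * (k + 1 : ℕ))).trace := (AddMonoidHom.map_trace f _).symm

theorem oddMoment_spMatrix_spVector (m : ℕ) :
    oddMoment (spMatrix R n) (spVector R n) m = fun p ↦ oddMoment p.1.1 p.2 m :=
  funext fun p ↦ map_oddMoment (Pi.evalRingHom (fun _ ↦ R) p) (spMatrix R n) (spVector R n) m

theorem spGenerator_inr (k : Fin n) :
    spGenerator R n (.inr k) = oddMoment (spMatrix R n) (spVector R n) k :=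
  (oddMoment_spMatrix_spVector _).symm

theorem spMatrix_mem_sp : spMatrix R n ∈ sp (Fin n) (SpPair R n → R) := by
  rw [mem_sp_iff]
  ext i j p
  let f : (SpPair R n → R) →+* R := Pi.evalRingHom _ p
  have hx : (spMatrix R n).map f = p.1.1 := rfl
  have h : ((spMatrix R n)ᵀ * J _ _).map f = (J _ _ * -spMatrix R n).map f := by
    rw [Matrix.map_mul, Matrix.map_mul, map_J, transpose_map, Matrix.map_neg _ (map_neg f), hx,
      mem_sp_iff.1 p.1.2]
  exact congrFun₂ h i j

theorem spMatrix_mem_matrix : spMatrix R n ∈ (spPolyFun R n).matrix := fun i j ↦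
  Algebra.subset_adjoin ⟨_, ⟨.inl (i, j), rfl⟩, rfl⟩

theorem spVector_mem (i : Fin n ⊕ Fin n) : spVector R n i ∈ spPolyFun R n :=
  Algebra.subset_adjoin ⟨_, ⟨.inr i, rfl⟩, rfl⟩

theorem spGenerator_mem_spInvariants (i : Fin n ⊕ Fin n) :
    spGenerator R n i ∈ spInvariants R n := by
  rcases i with k | k
  · refine ⟨?_, fun g p ↦ trace_conj_pow (SymplecticGroup.symplectic_det g.2) _ (2 * (k + 1))⟩
    rw [spGenerator_inl]
    exact trace_mem_of_mem_matrix (pow_mem spMatrix_mem_matrix _)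
  · refine ⟨?_, fun g p ↦ oddMoment_conj g.2 p.1.1 p.2 k⟩
    rw [spGenerator_inr]
    exact oddMoment_mem_of_mem_matrix (S := spPolyFun R n) spMatrix_mem_matrix spVector_mem k

theorem spGenerator_surjective {K : Type*} [Field K] [IsAlgClosed K] [CharZero K] :
    Function.Surjective fun p i ↦ spGenerator K n i p := by
  intro y
  have hinj : Function.Injective fun i : Fin n ↦ (i : ℕ) + 1 := fun i j h ↦
    Fin.ext (Nat.succ_injective h)
  obtain ⟨x, hx, htrace, v, hv⟩ := exists_mem_sp_trace_pow_eq_and_isUnit_det_hankel n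
    (Function.extend (fun i : Fin n ↦ (i : ℕ) + 1) (y ∘ Sum.inl) 0)
  obtain ⟨u, hu⟩ := exists_oddMoment_eq hx hv (y ∘ Sum.inr)
  refine ⟨(⟨x, hx⟩, u), funext ?_⟩
  rintro (k | k)
  · exact (htrace (k + 1) ⟨by omega, k.2⟩).trans (hinj.extend_apply _ _ k)
  · exact hu k

end Invariants

section Denominators

theorem inv_apply_mem_saturation {K Y ι : Type*} [Field K] [Fintype ι] [DecidableEq ι]
    {S : Subalgebra K (Y → K)} {M : Matrix ι ι (Y → K)} (hM : M ∈ S.matrix) (i j : ι) :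
    (fun y ↦ (M.map (· y))⁻¹ i j) ∈
      S.saturation (.powers M.det) (Submonoid.powers_le.2 (det_mem_of_mem_matrix hM)) := by
  refine ⟨M.det ^ 2, ⟨2, rfl⟩, ?_⟩
  suffices (M.det ^ 2 * fun y ↦ (M.map (· y))⁻¹ i j) = M.det * M.adjugate i j from
    this ▸ mul_mem (det_mem_of_mem_matrix hM) (adjugate_mem_matrix hM i j)
  funext y
  let f : (Y → K) →+* K := Pi.evalRingHom _ y
  have hdet : M.det y = (M.map (· y)).det := f.map_det M
  have hadj : M.adjugate i j y = (M.map (· y)).adjugate i j := congrFun₂ (f.map_adjugate M) i j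
  simp only [Pi.mul_apply, Pi.pow_apply, hdet, hadj, Matrix.inv_def, Ring.inverse_eq_inv',
    Matrix.smul_apply, smul_eq_mul]
  rcases eq_or_ne (M.map (· y)).det 0 with h | h
  · simp [h]
  · rw [sq, mul_assoc, mul_inv_cancel_left₀ h]

open LieAlgebra.Symplectic

variable {R K : Type*} [CommRing R] [Field K] {n : ℕ}

/-- The Hankel matrix of the odd moments, over the ring of functions on `SpPair R n`. -/
def spHankel (R : Type*) [CommRing R] (n : ℕ) : Matrix (Fin n) (Fin n) (SpPair R n → R) :=
  hankel n (oddMoment (spMatrix R n) (spVector R n))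

/-- The representative of the orbit of `p` in the section `spSection`, provided that the Hankel
matrix of the odd moments of `p` is invertible. -/
noncomputable def spNormalForm (p : SpPair R n) : SpPair R n :=
  (⟨spSection n (oddMoment p.1.1 p.2), spSection_mem_sp n _⟩, Sum.elim (firstVec R n) 0)

theorem spHankel_map_eval (p : SpPair R n) :
    (spHankel R n).map (· p) = hankel n (oddMoment p.1.1 p.2) := by
  ext i j
  simp [spHankel, hankel, oddMoment_spMatrix_spVector]

theorem det_spHankel_apply (p : SpPair R n) :
    (spHankel R n).det p = (hankel n (oddMoment p.1.1 p.2)).det := by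
  rw [← spHankel_map_eval]
  exact (Pi.evalRingHom (fun _ ↦ R) p).map_det _

theorem det_spHankel_ne_zero [CharZero K] : (spHankel K n).det ≠ 0 := by
  obtain ⟨x, hx, -, v, hv⟩ := exists_mem_sp_trace_pow_eq_and_isUnit_det_hankel (K := K) n 0
  intro h
  have := det_spHankel_apply (⟨x, hx⟩, v)
  rw [h] at this
  exact hv.ne_zero this.symm

theorem exists_spAct_spNormalForm_eq {p : SpPair K n} (hp : (spHankel K n).det p ≠ 0) :
    ∃ g, spAct g (spNormalForm p) = p := by
  rw [det_spHankel_apply] at hp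
  have hg := krylovFrame_mem_symplecticGroup p.1.2 hp.isUnit
  refine ⟨⟨_, hg⟩, Prod.ext (Subtype.ext ?_) krylovFrame_mulVec_firstVec⟩
  change krylovFrame p.1.1 p.2 * spSection n _ * (krylovFrame p.1.1 p.2)⁻¹ = p.1.1
  rw [← mul_krylovFrame p.1.2 hp.isUnit,
    mul_nonsing_inv_cancel_right _ _ (SymplecticGroup.symplectic_det hg)]

theorem oddMoment_spMatrix_mem_adjoin [CharZero K] (m : ℕ) :
    oddMoment (spMatrix K n) (spVector K n) m ∈ Algebra.adjoin K (Set.range (spGenerator K n)) := by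
  refine oddMoment_mem _ spMatrix_mem_sp (fun k hk ↦ ?_) (fun m hm ↦ ?_) m
  · obtain ⟨j, rfl⟩ := Nat.exists_eq_add_of_le' hk.1
    exact Algebra.subset_adjoin ⟨.inl ⟨j, hk.2⟩, spGenerator_inl _⟩
  · exact Algebra.subset_adjoin ⟨.inr ⟨m, hm⟩, spGenerator_inr _⟩

theorem spHankel_mem_matrix [CharZero K] :
    spHankel K n ∈ (Algebra.adjoin K (Set.range (spGenerator K n))).matrix :=
  fun _ _ ↦ oddMoment_spMatrix_mem_adjoin _

theorem det_spHankel_mem [CharZero K] :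
    (spHankel K n).det ∈ Algebra.adjoin K (Set.range (spGenerator K n)) :=
  det_mem_of_mem_matrix spHankel_mem_matrix

/-- The functions on `SpPair K n` that are polynomials in the generators up to a power of the
Hankel determinant. -/
noncomputable def spGeneratorSaturation (K : Type*) [Field K] [CharZero K] (n : ℕ) :
    Subalgebra K (SpPair K n → K) :=
  (Algebra.adjoin K (Set.range (spGenerator K n))).saturation (.powers (spHankel K n).det)
    (Submonoid.powers_le.2 det_spHankel_mem)

theorem spSection_apply_mem_spGeneratorSaturation [CharZero K] (i j : Fin n ⊕ Fin n) :
    (fun p : SpPair K n ↦ spSection n (oddMoment p.1.1 p.2) i j) ∈ spGeneratorSaturation K n := by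
  set T := spGeneratorSaturation K n
  have hmoment (m : ℕ) : oddMoment (spMatrix K n) (spVector K n) m ∈ T :=
    Subalgebra.le_saturation (oddMoment_spMatrix_mem_adjoin m)
  rcases i with i | i <;> rcases j with j | j
  · exact zero_mem T
  · have hinv : (of fun i j p ↦ ((spHankel K n).map (· p))⁻¹ i j) ∈ T.matrix :=
      inv_apply_mem_saturation spHankel_mem_matrix
    have hshift : (hankel n fun m ↦ oddMoment (spMatrix K n) (spVector K n) (m + 1)) ∈ T.matrix :=
      fun _ _ ↦ hmoment _
    refine (congrArg (· ∈ T) (funext fun p ↦ ?_)).mp (mul_mem (mul_mem hinv hshift) hinv i j)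
    simp [spSection, Matrix.mul_apply, spHankel_map_eval, hankel, oddMoment_spMatrix_spVector]
  · convert hmoment (i + j) using 1
    exact (oddMoment_spMatrix_spVector _).symm
  · exact zero_mem T

theorem comp_spNormalForm_mem [CharZero K] {F : SpPair K n → K} (hF : F ∈ spPolyFun K n) :
    F ∘ spNormalForm ∈ spGeneratorSaturation K n := by
  induction hF using Algebra.adjoin_induction with
  | mem F hF =>
    obtain ⟨_, ⟨⟨i, j⟩ | i, rfl⟩, rfl⟩ := hF
    · exact spSection_apply_mem_spGeneratorSaturation i j
    · exact algebraMap_mem _ (Sum.elim (firstVec K n) 0 i)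
  | algebraMap c => exact algebraMap_mem _ c
  | add F G _ _ hF hG => exact add_mem hF hG
  | mul F G _ _ hF hG => exact mul_mem hF hG

theorem exists_det_spHankel_pow_mul_mem [CharZero K] {F : SpPair K n → K}
    (hF : F ∈ spInvariants K n) :
    ∃ k : ℕ, (spHankel K n).det ^ k * F ∈ Algebra.adjoin K (Set.range (spGenerator K n)) := by
  have hdet : (spHankel K n).det ∈ spGeneratorSaturation K n :=
    Subalgebra.le_saturation det_spHankel_mem
  have h : (spHankel K n).det * (F ∘ spNormalForm) = (spHankel K n).det * F := by
    funext p
    by_cases hp : (spHankel K n).det p = 0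
    · simp [hp]
    · obtain ⟨g, hg⟩ := exists_spAct_spNormalForm_eq hp
      rw [Pi.mul_apply, Pi.mul_apply, Function.comp_apply, ← hF.2 g, hg]
  have hF : F ∈ spGeneratorSaturation K n := Subalgebra.mem_saturation_of_mul_mem_left
    (h ▸ mul_mem hdet (comp_spNormalForm_mem hF.1)) (Submonoid.mem_powers _)
  obtain ⟨_, ⟨k, rfl⟩, hk⟩ := Subalgebra.mem_saturation_iff.1 hF
  exact ⟨k, hk⟩

end Denominators

section General

variable (K : Type*) [Field K] [IsAlgClosed K] [CharZero K] (n : ℕ)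

theorem adjoin_range_spGenerator :
    Algebra.adjoin K (Set.range (spGenerator K n)) = spInvariants K n := by
  refine le_antisymm (Algebra.adjoin_le (Set.range_subset_iff.2 spGenerator_mem_spInvariants)) ?_
  intro F hF
  obtain ⟨k, hk⟩ := exists_det_spHankel_pow_mul_mem hF
  have : NoZeroDivisors (spPolyFun K n) := noZeroDivisors_adjoin_dual _
  have hdet : (spHankel K n).det ^ k ∈ Algebra.adjoin K (Set.range (spGenerator K n)) :=
    Subalgebra.pow_mem _ det_spHankel_mem k
  have hdet0 : (spHankel K n).det ^ k ≠ 0 := pow_ne_zero k det_spHankel_ne_zero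
  exact mem_adjoin_range_of_mul_mem spGenerator_surjective
    (fun i ↦ (spGenerator_mem_spInvariants i).1) hdet hdet0 hF.1 hk

theorem sp_invariants_of_sp_plus_vector_general :
    AlgebraicIndependent K (spGenerator K n) ∧
      Algebra.adjoin K (Set.range (spGenerator K n)) = spInvariants K n :=
  ⟨algebraicIndependent_of_surjective spGenerator_surjective, adjoin_range_spGenerator K n⟩

end General

section Complex

open LieAlgebra.Symplectic

variable {n : ℕ}

theorem symplJ_eq_neg_J (n : ℕ) : symplJ n = -J (Fin n) ℂ :=
  neg_J_eq_fromBlocks.symm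

theorem inSp_iff_mem_sp {x : Matrix (Fin n ⊕ Fin n) (Fin n ⊕ Fin n) ℂ} :
    inSp n x ↔ x ∈ sp (Fin n) ℂ := by
  rw [inSp, mem_sp_iff, symplJ_eq_neg_J, add_eq_zero_iff_eq_neg]
  simp only [mul_neg, neg_mul, neg_neg, neg_eq_iff_eq_neg]

theorem inSpGroup_iff_mem_symplecticGroup {g : Matrix (Fin n ⊕ Fin n) (Fin n ⊕ Fin n) ℂ} :
    inSpGroup n g ↔ g ∈ symplecticGroup (Fin n) ℂ := by
  rw [inSpGroup, SymplecticGroup.mem_iff', symplJ_eq_neg_J, mul_neg, neg_mul, neg_inj]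

theorem spGen_eq_spGenerator (i : Fin n ⊕ Fin n) (p : SpPair ℂ n) :
    spGen n i (p.1.1, p.2) = spGenerator ℂ n i p := by
  rcases i with k | k
  · rfl
  · simp [spGen, spGenerator, oddMoment, sympForm, symplForm, symplJ_eq_neg_J]

theorem aeval_spGenerator_apply (q : MvPolynomial (Fin n ⊕ Fin n) ℂ) (p : SpPair ℂ n) :
    MvPolynomial.aeval (spGenerator ℂ n) q p =
      MvPolynomial.eval (fun i ↦ spGen n i (p.1.1, p.2)) q := by
  simp only [aeval_fun_apply, spGen_eq_spGenerator]

theorem spGen_conj {g x : Matrix (Fin n ⊕ Fin n) (Fin n ⊕ Fin n) ℂ} (hg : inSpGroup n g)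
    (hx : inSp n x) (v : Fin n ⊕ Fin n → ℂ) (i : Fin n ⊕ Fin n) :
    spGen n i (g * x * g⁻¹, g *ᵥ v) = spGen n i (x, v) := by
  have h := (spGenerator_mem_spInvariants i).2 ⟨g, inSpGroup_iff_mem_symplecticGroup.1 hg⟩
    (⟨x, inSp_iff_mem_sp.1 hx⟩, v)
  rwa [← spGen_eq_spGenerator, ← spGen_eq_spGenerator] at h

theorem IsPolyFn.comp_mem_spPolyFun
    {F : Matrix (Fin n ⊕ Fin n) (Fin n ⊕ Fin n) ℂ × (Fin n ⊕ Fin n → ℂ) → ℂ} (hF : IsPolyFn n F) :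
    (fun p : SpPair ℂ n ↦ F (p.1.1, p.2)) ∈ spPolyFun ℂ n := by
  obtain ⟨q, hq⟩ := hF
  rw [spPolyFun, ← Set.range_comp, Algebra.adjoin_range_eq_range_aeval]
  refine ⟨q, funext fun p ↦ ?_⟩
  rw [hq]
  refine (aeval_fun_apply _ q p).trans ?_
  congr 2
  funext i
  rcases i with ij | i <;> rfl

theorem IsPolyFn.comp_mem_spInvariants
    {F : Matrix (Fin n ⊕ Fin n) (Fin n ⊕ Fin n) ℂ × (Fin n ⊕ Fin n → ℂ) → ℂ} (hF : IsPolyFn n F)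
    (hinv : ∀ g, inSpGroup n g → IsUnit g → ∀ x, inSp n x → ∀ v,
      F (g * x * g⁻¹, g *ᵥ v) = F (x, v)) :
    (fun p : SpPair ℂ n ↦ F (p.1.1, p.2)) ∈ spInvariants ℂ n := by
  refine ⟨hF.comp_mem_spPolyFun, fun g p ↦ ?_⟩
  have hunit : IsUnit g.1 := (isUnit_iff_isUnit_det _).2 (SymplecticGroup.symplectic_det g.2)
  exact hinv g.1 (inSpGroup_iff_mem_symplecticGroup.2 g.2) hunit p.1.1
    (inSp_iff_mem_sp.2 p.1.2) p.2

end Complex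

/-- The algebra of `Sp(2n,ℂ)`-invariant polynomial functions on
`𝔰𝔭(2n) ⊕ ℂ^{2n}` is a polynomial algebra freely generated by the `2n` functions
`Tr(x²), Tr(x⁴), …, Tr(x^{2n})`, `⟨v,xv⟩, ⟨v,x³v⟩, …, ⟨v,x^{2n−1}v⟩`:
the generators are invariant, the evaluation map from abstract polynomials in `2n`
variables is injective (free generation) and hits every invariant polynomial function. -/
theorem sp_invariants_of_sp_plus_vector (n : ℕ) :
    (∀ i : Fin n ⊕ Fin n, ∀ g, inSpGroup n g → IsUnit g →
      ∀ x, inSp n x → ∀ v, spGen n i (g * x * g⁻¹, g *ᵥ v) = spGen n i (x, v)) ∧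
    (∀ p : MvPolynomial (Fin n ⊕ Fin n) ℂ,
      (∀ x, inSp n x → ∀ v,
        MvPolynomial.eval (fun i => spGen n i (x, v)) p = 0) → p = 0) ∧
    (∀ F, IsPolyFn n F →
      (∀ g, inSpGroup n g → IsUnit g → ∀ x, inSp n x → ∀ v,
        F (g * x * g⁻¹, g *ᵥ v) = F (x, v)) →
      ∃ p : MvPolynomial (Fin n ⊕ Fin n) ℂ,
        ∀ x, inSp n x → ∀ v,
          F (x, v) = MvPolynomial.eval (fun i => spGen n i (x, v)) p) := by
  obtain ⟨hindep, hgen⟩ := sp_invariants_of_sp_plus_vector_general ℂ n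
  rw [Algebra.adjoin_range_eq_range_aeval] at hgen
  refine ⟨fun i g hg _ x hx v ↦ spGen_conj hg hx v i, fun p hp ↦ ?_, fun F hF hinv ↦ ?_⟩
  · refine algebraicIndependent_iff.1 hindep p (funext fun y ↦ ?_)
    exact (aeval_spGenerator_apply p y).trans (hp _ (inSp_iff_mem_sp.2 y.1.2) _)
  · obtain ⟨p, hp⟩ := hgen.ge (hF.comp_mem_spInvariants hinv)
    refine ⟨p, fun x hx v ↦ ?_⟩
    exact (congrFun hp _).symm.trans (aeval_spGenerator_apply p (⟨x, inSp_iff_mem_sp.1 hx⟩, v))
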